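/- arXiv:0803.0703 — 3 statements merged into one kernel-verified Lean document; each statement's English description precedes it below -/
import Mathlib

section
/- Let X be a ℂ^k-valued map analytic on a neighborhood of 0 in ℂ^k with X(0) = 0, let L = DX(0), and let λ₁, …, λ_k be the eigenvalues of L listed with multiplicity. Assume (i) (Poincaré domain) 0 does not belong to the convex hull of {λ₁, …, λ_k} in ℂ, and (ii) (nonresonance) for every multi-index m ∈ ℕ^k with |m| ≥ 2 and every j ∈ {1, …, k} one has ⟨m, λ⟩ ≠ λ_j. Then X is holomorphically linearizable: there exist a neighborhood V of 0 and an analytic map φ : V → ℂ^k with φ(0) = 0, Dφ(0) = Id, and Dφ(z)(L z) = X(φ(z)) for all z ∈ V. -/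
/-!
Writing the conjugacy as a power series `φ = id + ∑ qₙ`, the equation `Dφ(z)(L z) = X(φ(z))`
becomes, in degree `n`, a homological equation whose right-hand side depends on lower degrees only.
The homological operator is a sum of commuting operators, each acting through `L` on one argument or
on the value; by Gelfand theory its spectrum consists of differences `μ₁ + ⋯ + μₙ - μ` of spectral
values of `L`, so nonresonance makes it invertible.

In the Poincaré domain, `1 + σ L` has spectral radius less than `1` for some `σ`, hence is a strict
contraction after a change of norm. The homological operator multiplied by `-σ` is then `n` plus a
perturbation of norm at most `n ‖1 + σ L‖ + O(1)`, so that its inverse is bounded uniformly in `n`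
and there are no small divisors. Convergence follows by comparison with the inverse of the real
function `t ↦ κ⁻¹ t - ∑ₙ ‖pₙ‖ tⁿ`, with `pₙ` the terms of degree `n ≥ 2` of `X`.
-/

open Filter
open scoped IsMulCommutative NNReal ENNReal Topology

section Spectrum

theorem spectrum_centralizer_coe {R A : Type*} [CommRing R] [Ring A] [Algebra R A] (S : Set A)
    (a : Subalgebra.centralizer R S) : spectrum R (a : A) = spectrum R a := by
  refine (AlgHom.spectrum_apply_subset (Subalgebra.val _) a).antisymm fun r hr => ?_
  rw [spectrum.mem_iff] at hr ⊢
  rintro ⟨u, hu⟩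
  have hinv : (↑u⁻¹ : A) ∈ Subalgebra.centralizer R S := by
    refine (Subalgebra.mem_centralizer_iff R).2 fun g hg => ?_
    have hgu : Commute g (u : A) :=
      hu ▸ (Subalgebra.mem_centralizer_iff R).1
        (algebraMap R (Subalgebra.centralizer R S) r - a).2 g hg
    exact hgu.units_inv_right
  exact hr ⟨⟨algebraMap R _ r - a, ⟨_, hinv⟩, Subtype.ext ((Units.mul_inv_eq_one).2 hu.symm),
    Subtype.ext ((Units.inv_mul_eq_one).2 hu)⟩, rfl⟩

theorem exists_mem_spectrum_sum_eq {A ι : Type*} [NormedRing A] [NormedAlgebra ℂ A]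
    [CompleteSpace A] {a : ι → A} (ha : ∀ i j, Commute (a i) (a j)) (s : Finset ι) {z : ℂ}
    (hz : z ∈ spectrum ℂ (∑ i ∈ s, a i)) :
    ∃ χ : ι → ℂ, (∀ i, χ i ∈ spectrum ℂ (a i)) ∧ ∑ i ∈ s, χ i = z := by
  let D := Subalgebra.centralizer ℂ (Set.range a).centralizer
  have hD_comm : IsMulCommutative D :=
    .of_setLike_mul_comm <| Set.centralizer_centralizer_comm_of_comm <| by
      rintro _ ⟨i, rfl⟩ _ ⟨j, rfl⟩
      exact ha i j
  have hD_complete : CompleteSpace D := (Set.isClosed_centralizer _).completeSpace_coe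
  let _ : NormedCommRing D := { (inferInstance : NormedRing D) with mul_comm := mul_comm }
  let b : ι → D := fun i => ⟨a i, Set.subset_centralizer_centralizer ⟨i, rfl⟩⟩
  have hzb : z ∈ spectrum ℂ (∑ i ∈ s, b i) := by
    rw [← spectrum_centralizer_coe]
    simpa [b] using hz
  obtain ⟨f, hf⟩ := WeakDual.CharacterSpace.mem_spectrum_iff_exists.1 hzb
  refine ⟨fun i => f (b i), fun i => ?_, by rw [← hf, map_sum]⟩
  change f (b i) ∈ spectrum ℂ (b i : A)
  rw [spectrum_centralizer_coe]
  exact WeakDual.CharacterSpace.mem_spectrum_iff_exists.2 ⟨f, rfl⟩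

theorem isUnit_sum_sub_of_forall_sum_notMem {A ι : Type*} [NormedRing A] [NormedAlgebra ℂ A]
    [CompleteSpace A] [Fintype ι] {a : ι → A} {b : A} (ha : ∀ i j, Commute (a i) (a j))
    (hb : ∀ i, Commute b (a i))
    (h : ∀ μ : ι → ℂ, (∀ i, μ i ∈ spectrum ℂ (a i)) → ∑ i, μ i ∉ spectrum ℂ b) :
    IsUnit (∑ i, a i - b) := by
  let c : Option ι → A := fun o => o.elim (-b) a
  have hc : ∀ o o', Commute (c o) (c o') := by
    rintro (_ | i) (_ | j)
    · rfl
    · exact (hb j).neg_left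
    · exact (hb i).symm.neg_right
    · exact ha i j
  have hsum : ∑ i, a i - b = ∑ o, c o := by
    rw [Fintype.sum_option]
    exact sub_eq_neg_add _ _
  by_contra hunit
  rw [← spectrum.zero_mem_iff ℂ, hsum] at hunit
  obtain ⟨χ, hχ, hχ_sum⟩ := exists_mem_spectrum_sum_eq hc _ hunit
  rw [Fintype.sum_option] at hχ_sum
  have hnone : -χ none ∈ spectrum ℂ b := by
    simpa [c, ← spectrum.neg_eq] using hχ none
  rw [neg_eq_of_add_eq_zero_right hχ_sum] at hnone
  exact h (fun i => χ (some i)) (fun i => hχ (some i)) hnone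

theorem mul_norm_inverse_le_of_sum_eq {𝕜 A ι : Type*} [NormedField 𝕜] [NormedRing A]
    [NormedAlgebra 𝕜 A] [Fintype ι] {a b : A} {s : ι → A} {c σ : 𝕜} {M N : ℝ} (ha : IsUnit a)
    (hsum : ∑ i, s i = c • 1 + σ • b + σ • a) (hs : ∀ i, ‖s i‖ ≤ M) (hb : ‖b‖ ≤ N)
    (hone : ‖(1 : A)‖ ≤ 1) :
    (‖c‖ - Fintype.card ι * M - ‖σ‖ * N) * ‖Ring.inverse a‖ ≤ ‖σ‖ := by
  set r := Ring.inverse a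
  have hcr : c • r = (∑ i, s i) * r - σ • (b * r) - σ • 1 := by
    rw [hsum, add_mul, add_mul, smul_mul_assoc, smul_mul_assoc, smul_mul_assoc,
      Ring.mul_inverse_cancel _ ha, one_mul]
    abel
  have hsum_le : ‖∑ i, s i‖ ≤ Fintype.card ι * M :=
    (norm_sum_le_of_le _ fun i _ => hs i).trans (by simp)
  have hnorm : ‖c‖ * ‖r‖ ≤ Fintype.card ι * M * ‖r‖ + ‖σ‖ * (N * ‖r‖) + ‖σ‖ * 1 := calc
    ‖c‖ * ‖r‖ = ‖(∑ i, s i) * r - σ • (b * r) - σ • 1‖ := by rw [← norm_smul, hcr]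
    _ ≤ ‖(∑ i, s i) * r‖ + ‖σ • (b * r)‖ + ‖σ • (1 : A)‖ :=
      (norm_sub_le _ _).trans (by gcongr; exact norm_sub_le _ _)
    _ ≤ ‖∑ i, s i‖ * ‖r‖ + ‖σ‖ * (‖b‖ * ‖r‖) + ‖σ‖ * ‖(1 : A)‖ := by
      rw [norm_smul, norm_smul]
      gcongr <;> exact norm_mul_le _ _
    _ ≤ _ := by gcongr
  linarith

end Spectrum

section Homological

variable {𝕜 E : Type*} [NontriviallyNormedField 𝕜] [NormedAddCommGroup E] [NormedSpace 𝕜 E]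
  {n : ℕ}

/-- The operator `q ↦ q (v₁, …, T vᵢ, …, vₙ)` on `n`-linear maps. -/
noncomputable def slot (T : E →L[𝕜] E) (i : Fin n) : (E [×n]→L[𝕜] E) →L[𝕜] (E [×n]→L[𝕜] E) :=
  ContinuousMultilinearMap.compContinuousLinearMapL
    (Function.update (fun _ => .id 𝕜 E) i T)

/-- The operator `q ↦ T ∘ q` on `n`-linear maps. -/
noncomputable def post (n : ℕ) (T : E →L[𝕜] E) :
    (E [×n]→L[𝕜] E) →L[𝕜] (E [×n]→L[𝕜] E) :=
  ContinuousLinearMap.compContinuousMultilinearMapL 𝕜 (fun _ : Fin n => E) E E T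

theorem slot_apply (T : E →L[𝕜] E) (i : Fin n) (q : E [×n]→L[𝕜] E) (v : Fin n → E) :
    slot T i q v = q (Function.update v i (T (v i))) := by
  refine congrArg q (funext fun j => ?_)
  rcases eq_or_ne j i with rfl | hj
  · simp
  · simp [hj]

theorem post_apply (T : E →L[𝕜] E) (q : E [×n]→L[𝕜] E) (v : Fin n → E) :
    post n T q v = T (q v) := rfl

theorem norm_slot_le (T : E →L[𝕜] E) (i : Fin n) : ‖slot T i‖ ≤ ‖T‖ := by
  refine ContinuousLinearMap.opNorm_le_bound _ (norm_nonneg _) fun q => ?_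
  refine (ContinuousMultilinearMap.norm_compContinuousLinearMap_le q _).trans ?_
  have hprod : ∏ j ∈ Finset.univ.erase i,
      ‖Function.update (fun _ => ContinuousLinearMap.id 𝕜 E) i T j‖ ≤ 1 := by
    refine Finset.prod_le_one (fun _ _ => norm_nonneg _) fun j hj => ?_
    rw [Function.update_of_ne (Finset.ne_of_mem_erase hj)]
    exact ContinuousLinearMap.norm_id_le
  rw [← Finset.mul_prod_erase _ _ (Finset.mem_univ i), Function.update_self, mul_comm]
  gcongr
  exact mul_le_of_le_one_right (norm_nonneg _) hprod

theorem norm_post_le (n : ℕ) (T : E →L[𝕜] E) : ‖post n T‖ ≤ ‖T‖ :=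
  ContinuousLinearMap.opNorm_le_bound _ (norm_nonneg _) T.norm_compContinuousMultilinearMap_le

theorem slot_one (i : Fin n) : slot (1 : E →L[𝕜] E) i = 1 := by
  ext q v
  simp [slot_apply]

theorem slot_mul (S T : E →L[𝕜] E) (i : Fin n) : slot (S * T) i = slot T i * slot S i := by
  ext q v
  simp [slot_apply]

theorem commute_slot (T : E →L[𝕜] E) (i j : Fin n) : Commute (slot T i) (slot T j) := by
  rcases eq_or_ne i j with rfl | hij
  · rfl
  · ext q v
    simp [slot_apply, hij, hij.symm, Function.update_comm hij]

theorem commute_post_slot (S T : E →L[𝕜] E) (i : Fin n) : Commute (post n S) (slot T i) := by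
  ext q v
  simp [slot_apply, post_apply]

theorem slot_algebraMap_sub (T : E →L[𝕜] E) (i : Fin n) (r : 𝕜) :
    slot (algebraMap 𝕜 _ r - T) i = algebraMap 𝕜 _ r - slot T i := by
  ext q v
  simp [slot_apply, Algebra.algebraMap_eq_smul_one]

theorem spectrum_slot_subset (T : E →L[𝕜] E) (i : Fin n) :
    spectrum 𝕜 (slot T i) ⊆ spectrum 𝕜 T := by
  intro r hr
  rw [spectrum.mem_iff, ← slot_algebraMap_sub] at hr
  rintro ⟨u, hu⟩
  refine hr ⟨⟨slot u i, slot (↑u⁻¹ : E →L[𝕜] E) i, ?_, ?_⟩, by simp [hu]⟩ <;>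
    simp [← slot_mul, slot_one]

theorem spectrum_post_subset (n : ℕ) (T : E →L[𝕜] E) :
    spectrum 𝕜 (post n T) ⊆ spectrum 𝕜 T := by
  let Φ : (E →L[𝕜] E) →ₐ[𝕜] (E [×n]→L[𝕜] E) →L[𝕜] (E [×n]→L[𝕜] E) :=
    .ofLinearMap (ContinuousLinearMap.compContinuousMultilinearMapL 𝕜 (fun _ : Fin n => E) E E)
      rfl fun _ _ => rfl
  exact AlgHom.spectrum_apply_subset Φ T

/-- The homological operator `q ↦ ∑ᵢ q (v₁, …, L vᵢ, …, vₙ) - L (q v)` on `n`-linear maps.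
On homogeneous polynomial maps `h z = q (z, …, z)` it is `h ↦ (z ↦ Dh(z)(L z) - L (h z))`. -/
noncomputable def homological (n : ℕ) (L : E →L[𝕜] E) :
    (E [×n]→L[𝕜] E) →L[𝕜] (E [×n]→L[𝕜] E) :=
  ∑ i, slot L i - post n L

theorem homological_apply (n : ℕ) (L : E →L[𝕜] E) (q : E [×n]→L[𝕜] E) (v : Fin n → E) :
    homological n L q v = ∑ i, q (Function.update v i (L (v i))) - L (q v) := by
  simp [homological, slot_apply, post_apply]

theorem sum_slot_one_add_smul (n : ℕ) (L : E →L[𝕜] E) (σ : 𝕜) :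
    ∑ i : Fin n, slot (1 + σ • L) i = (n : 𝕜) • 1 + σ • post n L + σ • homological n L := by
  ext q v
  simp [slot_apply, homological_apply, post_apply, Finset.sum_add_distrib,
    Finset.smul_sum, smul_sub, Nat.cast_smul_eq_nsmul]

end Homological

section Nonresonance

variable {E : Type*} [NormedAddCommGroup E] [NormedSpace ℂ E] {n : ℕ}

/-- Nonresonance of order `n`: no sum of `n` spectral values of `L`, repetitions allowed, is a
spectral value of `L`. -/
def IsNonresonant (n : ℕ) (L : E →L[ℂ] E) : Prop :=
  ∀ μ : Fin n → ℂ, (∀ i, μ i ∈ spectrum ℂ L) → ∑ i, μ i ∉ spectrum ℂ L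

theorem mul_norm_inverse_homological_le {L : E →L[ℂ] E} (σ : ℂ) (hL : IsUnit (homological n L)) :
    (n * (1 - ‖1 + σ • L‖) - ‖σ‖ * ‖L‖) * ‖Ring.inverse (homological n L)‖ ≤ ‖σ‖ := by
  have h := mul_norm_inverse_le_of_sum_eq (A := (E [×n]→L[ℂ] E) →L[ℂ] (E [×n]→L[ℂ] E))
    (a := homological n L) (b := post n L) (s := slot (1 + σ • L)) (c := (n : ℂ)) hL
    (sum_slot_one_add_smul n L σ) (norm_slot_le _) (norm_post_le n L)
    ContinuousLinearMap.norm_id_le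
  rwa [Complex.norm_natCast, Fintype.card_fin, ← mul_one_sub] at h

theorem isUnit_homological [CompleteSpace E] {L : E →L[ℂ] E} (hL : IsNonresonant n L) :
    IsUnit (homological n L) :=
  isUnit_sum_sub_of_forall_sum_notMem (A := (E [×n]→L[ℂ] E) →L[ℂ] (E [×n]→L[ℂ] E))
    (commute_slot L) (commute_post_slot L L) fun μ hμ hmem =>
      hL μ (fun i => spectrum_slot_subset L i (hμ i)) (spectrum_post_subset n L hmem)

theorem bddAbove_norm_inverse_homological {L : E →L[ℂ] E} {σ : ℂ}
    (hσ : ‖1 + σ • L‖ < 1) (hL : ∀ n ≥ 2, IsUnit (homological n L)) :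
    BddAbove (Set.range fun n => ‖Ring.inverse (homological n L)‖) := by
  have hlim : Tendsto (fun n : ℕ => n * (1 - ‖1 + σ • L‖)) atTop atTop :=
    tendsto_natCast_atTop_atTop.atTop_mul_const (sub_pos.2 hσ)
  have hbound : ∀ᶠ n in atTop, ‖Ring.inverse (homological n L)‖ ≤ ‖σ‖ := by
    filter_upwards [hlim.eventually_ge_atTop (1 + ‖σ‖ * ‖L‖), eventually_ge_atTop 2] with n hn hn2
    refine le_trans ?_ (mul_norm_inverse_homological_le σ (hL n hn2))
    exact le_mul_of_one_le_left (ContinuousLinearMap.opNorm_nonneg _) (by linarith)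
  exact IsBoundedUnder.bddAbove_range (isBoundedUnder_of_eventually_le hbound)

end Nonresonance

section Majorant

variable {𝕜 E F G : Type*} [NontriviallyNormedField 𝕜] [NormedAddCommGroup E] [NormedSpace 𝕜 E]
  [NormedAddCommGroup F] [NormedSpace 𝕜 F] [NormedAddCommGroup G] [NormedSpace 𝕜 G]

/-- The part of the `n`-th coefficient of `p.comp q` that comes from the terms of `p` of degree at
least two. -/
noncomputable def compNonlinear (p : FormalMultilinearSeries 𝕜 F G)
    (q : FormalMultilinearSeries 𝕜 E F) (n : ℕ) : E [×n]→L[𝕜] G :=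
  ∑ c : Composition n with 1 < c.length, p.compAlongComposition q c

theorem comp_apply_eq_compNonlinear_add (p : FormalMultilinearSeries 𝕜 F G)
    (q : FormalMultilinearSeries 𝕜 E F) {n : ℕ} (hn : 0 < n) (v : Fin n → E) :
    p.comp q n v = compNonlinear p q n v + p 1 fun _ => q n v := by
  have hsingle : ({c : Composition n | ¬1 < c.length} : Finset _) = {Composition.single n hn} := by
    ext c
    have := c.length_pos_of_pos hn
    simp only [Finset.mem_filter_univ, Finset.mem_singleton, Composition.eq_single_iff_length hn]
    omega
  rw [FormalMultilinearSeries.comp, ← Finset.sum_filter_add_sum_filter_not _ fun c => 1 < c.length,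
    hsingle, Finset.sum_singleton, add_apply]
  refine congrArg (compNonlinear p q n v + ·) ?_
  rw [FormalMultilinearSeries.compAlongComposition_apply,
    FormalMultilinearSeries.applyComposition_single]
  exact p.congr (Composition.single_length hn) fun _ _ _ => rfl

theorem blocksFun_lt_of_one_lt_length {n : ℕ} {c : Composition n} (hc : 1 < c.length)
    (i : Fin c.length) : c.blocksFun i < n := by
  have hn : 0 < n := by have := c.length_le; omega
  exact (c.ne_single_iff hn).1 (fun h => hc.ne' ((c.eq_single_iff_length hn).1 h)) i

theorem compNonlinear_congr (p : FormalMultilinearSeries 𝕜 F G)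
    {q q' : FormalMultilinearSeries 𝕜 E F} {n : ℕ} (h : ∀ k < n, q k = q' k) :
    compNonlinear p q n = compNonlinear p q' n := by
  refine Finset.sum_congr rfl fun c hc => ?_
  ext v
  have hblock (i) := h _ (blocksFun_lt_of_one_lt_length (Finset.mem_filter.1 hc).2 i)
  exact congrArg (p c.length) (funext fun i => congrArg (· (v ∘ c.embedding i)) (hblock i))

theorem norm_compNonlinear_le (p : FormalMultilinearSeries 𝕜 F G)
    (q : FormalMultilinearSeries 𝕜 E F) (n : ℕ) :
    ‖compNonlinear p q n‖ ≤
      ∑ c : Composition n with 1 < c.length, ‖p c.length‖ * ∏ i, ‖q (c.blocksFun i)‖ :=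
  norm_sum_le_of_le _ fun c _ => p.compAlongComposition_norm q c

/-- The power series of the inverse of the real function `t ↦ κ⁻¹ t - ∑ aₙ tⁿ`, the sum being over
`2 ≤ n`, with its constant coefficient replaced by `x`. Its coefficients satisfy, with equality, the
recursive inequality of `radius_pos_of_norm_le_mul_sum`, and it has positive radius because
`FormalMultilinearSeries.rightInv` does. -/
noncomputable def majorant (a : ℕ → ℝ) (κ : ℝˣ) (x : ℝ) : FormalMultilinearSeries ℝ ℝ ℝ :=
  (FormalMultilinearSeries.ofScalars ℝ fun n => -a n).rightInv
    (ContinuousLinearEquiv.unitsEquivAut ℝ κ⁻¹) x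

theorem coeff_majorant_zero (a : ℕ → ℝ) (κ : ℝˣ) (x : ℝ) : (majorant a κ x).coeff 0 = x := by
  simp [majorant, FormalMultilinearSeries.coeff]

theorem coeff_majorant_one (a : ℕ → ℝ) (κ : ℝˣ) (x : ℝ) : (majorant a κ x).coeff 1 = κ := by
  simp [majorant, FormalMultilinearSeries.coeff, ContinuousLinearEquiv.unitsEquivAut_apply_symm]

theorem coeff_majorant (a : ℕ → ℝ) (κ : ℝˣ) (x : ℝ) {n : ℕ} (hn : 2 ≤ n) :
    (majorant a κ x).coeff n = κ * ∑ c : Composition n with 1 < c.length,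
      a c.length * ∏ i, (majorant a κ x).coeff (c.blocksFun i) := by
  let p : FormalMultilinearSeries ℝ ℝ ℝ := .ofScalars ℝ fun n => -a n
  let e : ℝ ≃L[ℝ] ℝ := ContinuousLinearEquiv.unitsEquivAut ℝ κ⁻¹
  have hrec : majorant a κ x n =
      -(e.symm : ℝ →L[ℝ] ℝ).compContinuousMultilinearMap
        (compNonlinear p (majorant a κ x) n) := by
    rw [majorant, FormalMultilinearSeries.rightInv_coeff _ _ _ _ hn, compNonlinear]
    congr!
    simp
  rw [FormalMultilinearSeries.coeff, hrec]
  simp [e, ContinuousLinearEquiv.unitsEquivAut_apply_symm, compNonlinear, mul_comm, p]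

theorem radius_pos_of_norm_le_mul_sum {p : FormalMultilinearSeries 𝕜 F G}
    {q : FormalMultilinearSeries 𝕜 E F} {C : ℝ} (hp : 0 < p.radius)
    (hq : ∀ n ≥ 2, ‖q n‖ ≤ C * ∑ c : Composition n with 1 < c.length,
      ‖p c.length‖ * ∏ i, ‖q (c.blocksFun i)‖) :
    0 < q.radius := by
  obtain ⟨κ, hCκ, hqκ⟩ : ∃ κ : ℝˣ, C ≤ κ ∧ ‖q 1‖ ≤ κ :=
    ⟨Units.mk0 (max (max C ‖q 1‖) 1) (by positivity), by simp, by simp⟩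
  set Q := majorant (fun n => ‖p n‖) κ ‖q 0‖
  have hle : ∀ n, ‖q n‖ ≤ Q.coeff n := by
    intro n
    induction n using Nat.strong_induction_on with | _ n ih =>
    match n with
    | 0 => exact (coeff_majorant_zero ..).ge
    | 1 => exact hqκ.trans_eq (coeff_majorant_one ..).symm
    | n + 2 =>
      rw [coeff_majorant _ _ _ (by omega)]
      refine (hq _ (by omega)).trans ?_
      gcongr with c hc i
      · exact (norm_nonneg _).trans hqκ
      · exact ih _ (blocksFun_lt_of_one_lt_length (Finset.mem_filter.1 hc).2 i)
  have hpos : 0 < Q.radius := by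
    refine FormalMultilinearSeries.radius_rightInv_pos_of_radius_pos (hp.trans_le ?_)
    exact FormalMultilinearSeries.radius_le_of_le fun n => by simp
  refine hpos.trans_le (FormalMultilinearSeries.radius_le_of_le fun n => ?_)
  rw [FormalMultilinearSeries.norm_apply_eq_norm_coef]
  exact (hle n).trans (le_abs_self _)

end Majorant

section TermwiseDerivative

variable {E F : Type*} [NormedAddCommGroup E] [NormedSpace ℂ E] [NormedAddCommGroup F]
  [NormedSpace ℂ F]

theorem hasSum_deriv_comp_line [CompleteSpace F] {q : FormalMultilinearSeries ℂ E F} {z : E}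
    (hz : z ∈ Metric.eball 0 q.radius) (w : E) :
    HasSum (fun n => deriv (fun t : ℂ => q n fun _ => z + t • w) 0)
      (deriv (fun t : ℂ => q.sum (z + t • w)) 0) := by
  obtain ⟨r, hzr, hrq⟩ := ENNReal.lt_iff_exists_nnreal_btwn.1 (mem_eball_zero_iff.1 hz)
  have hcont : Continuous fun t : ℂ => z + t • w := by fun_prop
  have hdiff (n : ℕ) : Differentiable ℂ fun t : ℂ => q n fun _ => z + t • w := by
    have : Differentiable ℂ fun v : Fin n → E => q n v := fun v =>
      ((q n).hasFDerivAt v).differentiableAt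
    fun_prop
  have hzU : (0 : ℂ) ∈ (fun t : ℂ => z + t • w) ⁻¹' Metric.ball 0 r := by
    simpa [← NNReal.coe_lt_coe] using hzr
  refine Complex.hasSum_deriv_of_summable_norm (q.summable_norm_mul_pow hrq)
    (fun n => (hdiff n).differentiableOn) (Metric.isOpen_ball.preimage hcont) (fun n t ht => ?_) hzU
  have htr : ‖z + t • w‖ ≤ r := (mem_ball_zero_iff.1 ht).le
  calc ‖q n fun _ => z + t • w‖ ≤ ‖q n‖ * ‖z + t • w‖ ^ n := by
        simpa using (q n).le_opNorm fun _ => z + t • w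
    _ ≤ ‖q n‖ * r ^ n := by gcongr

theorem hasSum_fderiv_sum [CompleteSpace F] {q : FormalMultilinearSeries ℂ E F} {z : E}
    (hz : z ∈ Metric.eball 0 q.radius) (w : E) :
    HasSum (fun n => ∑ i, q n (Function.update (fun _ => z) i w)) (fderiv ℂ q.sum z w) := by
  have hline : HasDerivAt (fun t : ℂ => z + t • w) w 0 := by
    simpa using ((hasDerivAt_id (0 : ℂ)).smul_const w).const_add z
  have hq_diff : DifferentiableAt ℂ q.sum z :=
    ((q.hasFPowerSeriesOnBall (pos_of_gt hz)).analyticAt_of_mem hz).differentiableAt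
  have hsum : deriv (fun t : ℂ => q.sum (z + t • w)) 0 = fderiv ℂ q.sum z w :=
    (HasFDerivAt.comp_hasDerivAt_of_eq 0 hq_diff.hasFDerivAt hline (by simp)).deriv
  have hterm (n : ℕ) : deriv (fun t : ℂ => q n fun _ => z + t • w) 0 =
      ∑ i, q n (Function.update (fun _ => z) i w) := by
    have hpi : HasDerivAt (fun (t : ℂ) (_ : Fin n) => z + t • w) (fun _ => w) 0 :=
      hasDerivAt_pi.2 fun _ => hline
    have hcomp := HasFDerivAt.comp_hasDerivAt_of_eq 0 ((q n).hasFDerivAt fun _ => z) hpi (by simp)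
    refine hcomp.deriv.trans ?_
    simp [ContinuousMultilinearMap.linearDeriv_apply]
  simpa only [hterm, hsum] using hasSum_deriv_comp_line hz w

end TermwiseDerivative

section LinearizingSeries

variable {𝕜 E : Type*} [NontriviallyNormedField 𝕜] [NormedAddCommGroup E] [NormedSpace 𝕜 E]

/-- The power series `q` of the linearization of the vector field with power series `p` and linear
part `L`. The linear term is the identity, and the term of degree `n ≥ 2` solves
`homological n L (q n) = compNonlinear p q n`. Since `compNonlinear` involves only terms of lower
degree, the recursion truncates `q` below `n`. The inverse is `0` if the homological operator is not
invertible. -/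
noncomputable def linearizingSeries (p : FormalMultilinearSeries 𝕜 E E) (L : E →L[𝕜] E) :
    FormalMultilinearSeries 𝕜 E E
  | 0 => 0
  | 1 => (continuousMultilinearCurryFin1 𝕜 E E).symm (.id 𝕜 E)
  | n + 2 => Ring.inverse (homological (n + 2) L)
      (compNonlinear p (fun k => if k < n + 2 then linearizingSeries p L k else 0) (n + 2))

theorem linearizingSeries_zero (p : FormalMultilinearSeries 𝕜 E E) (L : E →L[𝕜] E) :
    linearizingSeries p L 0 = 0 := by
  rw [linearizingSeries]

theorem linearizingSeries_one (p : FormalMultilinearSeries 𝕜 E E) (L : E →L[𝕜] E) :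
    linearizingSeries p L 1 = (continuousMultilinearCurryFin1 𝕜 E E).symm (.id 𝕜 E) := by
  rw [linearizingSeries]

theorem linearizingSeries_of_two_le (p : FormalMultilinearSeries 𝕜 E E) (L : E →L[𝕜] E) {n : ℕ}
    (hn : 2 ≤ n) : linearizingSeries p L n =
      Ring.inverse (homological n L) (compNonlinear p (linearizingSeries p L) n) := by
  obtain ⟨n, rfl⟩ := Nat.exists_eq_add_of_le' hn
  rw [linearizingSeries]
  exact congrArg _ (compNonlinear_congr p fun k hk => if_pos hk)

theorem homological_linearizingSeries (p : FormalMultilinearSeries 𝕜 E E) {L : E →L[𝕜] E} {n : ℕ}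
    (hn : 2 ≤ n) (hL : IsUnit (homological n L)) :
    homological n L (linearizingSeries p L n) = compNonlinear p (linearizingSeries p L) n := by
  rw [linearizingSeries_of_two_le p L hn]
  exact DFunLike.congr_fun (Ring.mul_inverse_cancel _ hL) _

theorem comp_linearizingSeries_apply {p : FormalMultilinearSeries 𝕜 E E} {L : E →L[𝕜] E}
    (hp0 : p 0 = 0) (hp1 : ∀ v, p 1 (fun _ => v) = L v) (hL : ∀ n ≥ 2, IsUnit (homological n L))
    (n : ℕ) (z : E) :
    p.comp (linearizingSeries p L) n (fun _ => z) =
      ∑ i, linearizingSeries p L n (Function.update (fun _ => z) i (L z)) := by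
  match n with
  | 0 =>
    rw [FormalMultilinearSeries.comp_coeff_zero', hp0]
    rfl
  | 1 =>
    rw [FormalMultilinearSeries.comp_coeff_one, linearizingSeries_one, hp1]
    simp
  | n + 2 =>
    have h := congrArg (· fun _ => z) <|
      homological_linearizingSeries p le_add_self (hL (n + 2) le_add_self)
    simp only [homological_apply] at h
    rw [comp_apply_eq_compNonlinear_add p _ (by omega), hp1, ← h, sub_add_cancel]

theorem radius_linearizingSeries_pos {p : FormalMultilinearSeries 𝕜 E E} {L : E →L[𝕜] E}
    (hp : 0 < p.radius) (hL : BddAbove (Set.range fun n => ‖Ring.inverse (homological n L)‖)) :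
    0 < (linearizingSeries p L).radius := by
  obtain ⟨C, hC⟩ := hL
  refine radius_pos_of_norm_le_mul_sum (C := C) hp fun n hn => ?_
  rw [linearizingSeries_of_two_le p L hn]
  refine (ContinuousLinearMap.le_of_opNorm_le _ (hC ⟨n, rfl⟩) _).trans ?_
  gcongr
  · exact (ContinuousLinearMap.opNorm_nonneg _).trans (hC ⟨n, rfl⟩)
  · exact norm_compNonlinear_le _ _ _

end LinearizingSeries

section Linearizable

variable {E G : Type*} [NormedAddCommGroup E] [NormedSpace ℂ E] [NormedAddCommGroup G]
  [NormedSpace ℂ G]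

/-- Holomorphic linearizability of a vector field `X` at its singular point `0`: some germ of an
analytic map, tangent to the identity, conjugates the linear vector field `z ↦ DX(0) z` to `X`. -/
def IsHolomorphicallyLinearizable (X : E → E) : Prop :=
  ∃ (V : Set E) (φ : E → E), V ∈ 𝓝 0 ∧ AnalyticOnNhd ℂ φ V ∧ φ 0 = 0 ∧
    fderiv ℂ φ 0 = .id ℂ E ∧ ∀ z ∈ V, fderiv ℂ φ z (fderiv ℂ X 0 z) = X (φ z)

theorem isHolomorphicallyLinearizable_of_norm_lt_one [CompleteSpace E] {X : E → E} {σ : ℂ}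
    (hX : AnalyticAt ℂ X 0) (hX0 : X 0 = 0) (hσ : ‖1 + σ • fderiv ℂ X 0‖ < 1)
    (hL : ∀ n ≥ 2, IsNonresonant n (fderiv ℂ X 0)) : IsHolomorphicallyLinearizable X := by
  obtain ⟨p, hp⟩ := hX
  have hL_unit (n) (hn : n ≥ 2) := isUnit_homological (hL n hn)
  set q := linearizingSeries p (fderiv ℂ X 0)
  have hq_pos : 0 < q.radius :=
    radius_linearizingSeries_pos hp.radius_pos (bddAbove_norm_inverse_homological hσ hL_unit)
  have hq : HasFPowerSeriesAt q.sum q 0 := (q.hasFPowerSeriesOnBall hq_pos).hasFPowerSeriesAt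
  have hq0 : q.sum 0 = 0 :=
    (hq.coeff_zero fun _ => 0).symm.trans <| DFunLike.congr_fun (linearizingSeries_zero p _) _
  have hq1 : fderiv ℂ q.sum 0 = .id ℂ E :=
    hq.fderiv_eq.trans <| (LinearIsometryEquiv.eq_symm_apply _).1 (linearizingSeries_one p _)
  have hp0 : p 0 = 0 := by
    ext v
    rw [hp.coeff_zero, hX0]
    rfl
  have hp1 (v : E) : p 1 (fun _ => v) = fderiv ℂ X 0 v := by
    rw [hp.fderiv_eq]
    rfl
  have hcomp : HasFPowerSeriesAt (X ∘ q.sum) (p.comp q) 0 := .comp (by rwa [hq0]) hq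
  have hconj : ∀ᶠ z in 𝓝 0, fderiv ℂ q.sum z (fderiv ℂ X 0 z) = X (q.sum z) := by
    filter_upwards [hcomp.eventually_hasSum, Metric.eball_mem_nhds 0 hq_pos] with z hXq hz
    refine (hasSum_fderiv_sum hz _).unique ?_
    rw [zero_add] at hXq
    exact (funext (comp_linearizingSeries_apply hp0 hp1 hL_unit · z)) ▸ hXq
  exact ⟨_, q.sum, hq.analyticAt.eventually_analyticAt.and hconj, fun z hz => hz.1, hq0, hq1,
    fun z hz => hz.2⟩

theorem IsHolomorphicallyLinearizable.of_conj {X : E → E} (e : E ≃L[ℂ] G)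
    (h : IsHolomorphicallyLinearizable (e ∘ X ∘ e.symm)) : IsHolomorphicallyLinearizable X := by
  obtain ⟨V, φ, hV, hφ, hφ0, hφ1, hφX⟩ := h
  have hfderiv (z w : E) : fderiv ℂ (e.symm ∘ φ ∘ e) z w = e.symm (fderiv ℂ φ (e z) (e w)) := by
    rw [e.symm.comp_fderiv, e.comp_right_fderiv]
    rfl
  refine ⟨e ⁻¹' V, e.symm ∘ φ ∘ e, e.continuous.continuousAt.preimage_mem_nhds (by simpa),
    fun z hz => (e.symm.analyticAt _).comp ((hφ _ hz).comp (e.analyticAt z)), by simp [hφ0], ?_,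
    fun z hz => ?_⟩
  · ext w
    simp [hfderiv, hφ1]
  · have hz := hφX _ hz
    rw [e.comp_fderiv, e.symm.comp_right_fderiv] at hz
    rw [hfderiv]
    simpa using congrArg e.symm hz

end Linearizable

section AdaptedNorm

open scoped BoundedContinuousFunction

variable {A : Type*} [NormedRing A] [NormedAlgebra ℂ A] [CompleteSpace A]

theorem eventually_norm_pow_le_of_spectralRadius_lt {a : A} {c : ℝ≥0}
    (ha : spectralRadius ℂ a < c) :
    ∀ᶠ n in atTop, ‖a ^ n‖ ≤ (c : ℝ) ^ n := by
  filter_upwards [(spectrum.gelfand_formula a).eventually_lt_const ha, eventually_gt_atTop 0]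
    with n hn hn0
  rw [one_div, ENNReal.rpow_inv_lt_iff (by exact_mod_cast hn0), ENNReal.rpow_natCast] at hn
  exact_mod_cast hn.le

theorem exists_norm_pow_le_of_spectralRadius_lt {a : A} {c : ℝ≥0} (ha : spectralRadius ℂ a < c) :
    ∃ C : ℝ, ∀ n, ‖a ^ n‖ ≤ C * (c : ℝ) ^ n := by
  have hO : (fun n => a ^ n) =O[atTop] fun n => (c : ℝ) ^ n :=
    .of_bound 1 <| by simpa using eventually_norm_pow_le_of_spectralRadius_lt ha
  have hc : (c : ℝ) ≠ 0 := by exact_mod_cast (pos_of_gt ha).ne'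
  obtain ⟨C, -, hC⟩ := Asymptotics.bound_of_isBigO_nat_atTop hO
  exact ⟨C, fun n => by simpa using hC (pow_ne_zero n hc)⟩

section ScaledOrbit

variable {𝕜 E : Type*} [NontriviallyNormedField 𝕜] [NormedAddCommGroup E] [NormedSpace 𝕜 E]

/-- The map sending `x` to its rescaled orbit `n ↦ c⁻ⁿ Tⁿ x`. The supremum norm of the orbit is a
norm on `E` for which `T` has operator norm at most `‖c‖`. -/
noncomputable def scaledOrbit (T : E →L[𝕜] E) (c : 𝕜) (C : ℝ) (hC : ∀ n, ‖c⁻¹ ^ n • T ^ n‖ ≤ C) :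
    E →L[𝕜] ℕ →ᵇ E :=
  LinearMap.mkContinuous
    { toFun x := .ofNormedAddCommGroupDiscrete (fun n => c⁻¹ ^ n • (T ^ n) x) (C * ‖x‖)
        fun n => (c⁻¹ ^ n • T ^ n).le_of_opNorm_le (hC n) x
      map_add' x y := by ext n; simp
      map_smul' a x := by ext n; simp [smul_comm a] }
    C fun x => (BoundedContinuousFunction.norm_le
      (mul_nonneg ((norm_nonneg _).trans (hC 0)) (norm_nonneg x))).2
        fun n => (c⁻¹ ^ n • T ^ n).le_of_opNorm_le (hC n) x

variable {T : E →L[𝕜] E} {c : 𝕜} {C : ℝ} (hC : ∀ n, ‖c⁻¹ ^ n • T ^ n‖ ≤ C)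

theorem scaledOrbit_apply (x : E) (n : ℕ) :
    scaledOrbit T c C hC x n = c⁻¹ ^ n • (T ^ n) x := rfl

theorem norm_le_norm_scaledOrbit (x : E) : ‖x‖ ≤ ‖scaledOrbit T c C hC x‖ := by
  simpa [scaledOrbit_apply] using (scaledOrbit T c C hC x).norm_coe_le_norm 0

theorem norm_scaledOrbit_apply_le (hc : c ≠ 0) (x : E) :
    ‖scaledOrbit T c C hC (T x)‖ ≤ ‖c‖ * ‖scaledOrbit T c C hC x‖ := by
  refine (BoundedContinuousFunction.norm_le (by positivity)).2 fun n => ?_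
  have hshift : scaledOrbit T c C hC (T x) n = c • scaledOrbit T c C hC x (n + 1) := by
    rw [scaledOrbit_apply, scaledOrbit_apply, pow_succ T, smul_smul, pow_succ',
      mul_inv_cancel_left₀ hc]
    rfl
  rw [hshift, norm_smul]
  gcongr
  exact BoundedContinuousFunction.norm_coe_le_norm _ _

end ScaledOrbit

theorem exists_equiv_norm_conj_lt_one {E : Type*} [NormedAddCommGroup E] [NormedSpace ℂ E]
    [CompleteSpace E] {T : E →L[ℂ] E} (hT : spectralRadius ℂ T < 1) :
    ∃ (S : Submodule ℂ (ℕ →ᵇ E)) (e : E ≃L[ℂ] S),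
      CompleteSpace S ∧ ‖e.conjContinuousAlgEquiv T‖ < 1 := by
  obtain ⟨c, hTc, hc1⟩ := ENNReal.lt_iff_exists_nnreal_btwn.1 hT
  have hc : (0 : ℝ) < c := by exact_mod_cast pos_of_gt hTc
  have hc_norm : ‖((c : ℝ) : ℂ)‖ = c := by simp
  obtain ⟨C, hC⟩ := exists_norm_pow_le_of_spectralRadius_lt hTc
  have horbit (n) : ‖((c : ℝ) : ℂ)⁻¹ ^ n • T ^ n‖ ≤ C := by
    rw [norm_smul, norm_pow, norm_inv, hc_norm, inv_pow, inv_mul_le_iff₀' (by positivity)]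
    exact hC n
  have hanti : AntilipschitzWith 1 (scaledOrbit T c C horbit) :=
    ContinuousLinearMap.antilipschitz_of_bound _ fun x => by
      simpa using norm_le_norm_scaledOrbit horbit x
  have hclosed := hanti.isClosed_range (scaledOrbit T c C horbit).uniformContinuous
  let e := (scaledOrbit T c C horbit).equivRange hanti.injective hclosed
  have hcontract : ‖e.conjContinuousAlgEquiv T‖ ≤ c := by
    refine ContinuousLinearMap.opNorm_le_bound _ hc.le fun y => ?_
    obtain ⟨x, rfl⟩ := e.surjective y
    rw [ContinuousLinearEquiv.conjContinuousAlgEquiv_apply_apply, e.symm_apply_apply]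
    exact (norm_scaledOrbit_apply_le horbit (by exact_mod_cast hc.ne') x).trans_eq
      (congrArg (· * _) hc_norm)
  exact ⟨_, e, hclosed.completeSpace_coe, hcontract.trans_lt (by exact_mod_cast hc1)⟩

end AdaptedNorm

section PoincareDomain

theorem norm_one_sub_lt_one {z : ℂ} (hz : ‖z‖ ^ 2 < 2 * z.re) : ‖1 - z‖ < 1 := by
  rw [← sq_lt_one_iff₀ (norm_nonneg _), ← Complex.normSq_eq_norm_sq, Complex.normSq_sub, map_one,
    Complex.normSq_eq_norm_sq, one_mul, Complex.conj_re]
  linarith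

theorem exists_forall_norm_one_add_mul_lt_one {K : Set ℂ} (hK : Bornology.IsBounded K)
    (h0 : 0 ∉ closedConvexHull ℝ K) : ∃ σ : ℂ, ∀ z ∈ K, ‖1 + σ * z‖ < 1 := by
  obtain ⟨f, u, hf0, hfu⟩ := RCLike.geometric_hahn_banach_point_closed (𝕜 := ℂ)
    convex_closedConvexHull isClosed_closedConvexHull h0
  have hu : 0 < u := by simpa using hf0
  obtain ⟨B, hB, hKB⟩ := hK.exists_pos_norm_le
  set t : ℝ := u / (‖f‖ * B + 1) ^ 2
  have ht : 0 < t := by positivity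
  refine ⟨-(t * f 1), fun z hz => ?_⟩
  have hfz : f z = f 1 * z := by rw [mul_comm, ← smul_eq_mul, ← map_smul, smul_eq_mul, mul_one]
  have hre : u < (f z).re := hfu z (subset_closedConvexHull hz)
  have hnorm : ‖f z‖ ≤ ‖f‖ * B + 1 := by
    linarith [f.le_opNorm_of_le (hKB z hz)]
  rw [neg_mul, mul_assoc, ← hfz, ← sub_eq_add_neg]
  refine norm_one_sub_lt_one ?_
  rw [norm_mul, mul_pow, Complex.norm_real, Real.norm_of_nonneg ht.le, Complex.re_ofReal_mul]
  calc t ^ 2 * ‖f z‖ ^ 2 ≤ t ^ 2 * (‖f‖ * B + 1) ^ 2 := by gcongr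
    _ = t * u := by simp only [t]; field_simp
    _ < t * (2 * (f z).re) := by gcongr; linarith
    _ = 2 * (t * (f z).re) := by ring

theorem spectralRadius_one_add_smul_lt_one {A : Type*} [NormedRing A] [NormedAlgebra ℂ A]
    [CompleteSpace A] {a : A} {σ : ℂ} (h : ∀ z ∈ spectrum ℂ a, ‖1 + σ * z‖ < 1) :
    spectralRadius ℂ (1 + σ • a) < 1 := by
  cases subsingleton_or_nontrivial A
  · simp [spectrum.SpectralRadius.of_subsingleton]
  rw [← ENNReal.coe_one]
  refine spectrum.spectralRadius_lt_of_forall_lt _ fun z hz => ?_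
  rw [← map_one (algebraMap ℂ A), ← spectrum.vadd_eq,
    spectrum.smul_eq_smul σ a (spectrum.nonempty a)] at hz
  obtain ⟨_, ⟨w, hw, rfl⟩, rfl⟩ := hz
  exact h w hw

end PoincareDomain

section Eigenvalues

theorem closedConvexHull_eq_convexHull_of_finite {E : Type*} [AddCommGroup E] [Module ℝ E]
    [TopologicalSpace E] [IsTopologicalAddGroup E] [ContinuousSMul ℝ E] [T2Space E] {s : Set E}
    (hs : s.Finite) : closedConvexHull ℝ s = convexHull ℝ s := by
  rw [closedConvexHull_eq_closure_convexHull, (hs.isClosed_convexHull ℝ).closure_eq]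

theorem exists_sum_eq_card_and_sum_mul_eq {ι κ R : Type*} [Fintype ι] [Fintype κ]
    [NonAssocSemiring R] (lam : κ → R) (g : ι → κ) :
    ∃ m : κ → ℕ, ∑ i, m i = Fintype.card ι ∧ ∑ i, (m i : R) * lam i = ∑ a, lam (g a) := by
  classical
  refine ⟨fun i => Finset.card {a | g a = i}, ?_, ?_⟩
  · exact (Finset.card_eq_sum_card_fiberwise fun a _ => Finset.mem_univ (g a)).symm
  · rw [← Finset.sum_fiberwise' _ g]
    simp

theorem isNonresonant_of_spectrum_eq_range {E ι : Type*} [NormedAddCommGroup E] [NormedSpace ℂ E]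
    [Fintype ι] {L : E →L[ℂ] E} {lam : ι → ℂ} {n : ℕ} (hL : spectrum ℂ L = Set.range lam)
    (h : ∀ m : ι → ℕ, ∑ i, m i = n → ∀ j, ∑ i, (m i : ℂ) * lam i ≠ lam j) :
    IsNonresonant n L := by
  intro μ hμ
  simp only [hL, Set.mem_range] at hμ ⊢
  choose g hg using hμ
  obtain ⟨m, hm, hsum⟩ := exists_sum_eq_card_and_sum_mul_eq lam g
  rw [← funext hg, ← hsum]
  rintro ⟨j, hj⟩
  exact h m (hm.trans (Fintype.card_fin n)) j hj.symm

open Polynomial in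
theorem spectrum_eq_range_of_charpoly_toMatrix' {𝕜 ι κ : Type*} [NontriviallyNormedField 𝕜]
    [CompleteSpace 𝕜] [Fintype ι] [DecidableEq ι] [Fintype κ] {L : (ι → 𝕜) →L[𝕜] (ι → 𝕜)}
    {lam : κ → 𝕜}
    (h : (LinearMap.toMatrix' (L : (ι → 𝕜) →ₗ[𝕜] (ι → 𝕜))).charpoly = ∏ i, (X - C (lam i))) :
    spectrum 𝕜 L = Set.range lam := by
  ext μ
  rw [← AlgEquiv.spectrum_eq (Module.End.toContinuousLinearMap (ι → 𝕜)).symm L,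
    ← AlgEquiv.spectrum_eq LinearMap.toMatrixAlgEquiv', Matrix.mem_spectrum_iff_isRoot_charpoly]
  change IsRoot (LinearMap.toMatrix' (L : (ι → 𝕜) →ₗ[𝕜] (ι → 𝕜))).charpoly μ ↔ _
  simp [h, Polynomial.eval_prod, Finset.prod_eq_zero_iff, sub_eq_zero, eq_comm (b := μ)]

end Eigenvalues

theorem poincare_linearization_general {E : Type*} [NormedAddCommGroup E] [NormedSpace ℂ E]
    [CompleteSpace E] {X : E → E} (hX : AnalyticAt ℂ X 0) (hX0 : X 0 = 0)
    (hPoincare : 0 ∉ closedConvexHull ℝ (spectrum ℂ (fderiv ℂ X 0)))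
    (hNonres : ∀ n ≥ 2, IsNonresonant n (fderiv ℂ X 0)) : IsHolomorphicallyLinearizable X := by
  obtain ⟨σ, hσ⟩ := exists_forall_norm_one_add_mul_lt_one (spectrum.isBounded _) hPoincare
  obtain ⟨S, e, _, he⟩ :=
    exists_equiv_norm_conj_lt_one (spectralRadius_one_add_smul_lt_one hσ)
  have hfderiv : fderiv ℂ (e ∘ X ∘ e.symm) 0 = e.conjContinuousAlgEquiv (fderiv ℂ X 0) := by
    rw [e.comp_fderiv, e.symm.comp_right_fderiv, map_zero]
    rfl
  refine .of_conj e (isHolomorphicallyLinearizable_of_norm_lt_one (σ := σ) ?_ ?_ ?_ ?_)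
  · have hX' : AnalyticAt ℂ X (e.symm 0) := by rwa [map_zero]
    exact (e.analyticAt _).comp (hX'.comp (e.symm.analyticAt 0))
  · simp [hX0]
  · rw [hfderiv]
    convert he using 2
    simp only [ContinuousLinearEquiv.conjContinuousAlgEquiv_apply]
    ext y
    simp
  · simpa only [hfderiv, IsNonresonant, AlgEquiv.spectrum_eq] using hNonres

/-- **Poincaré's linearization theorem.** If a germ of a holomorphic vector field
`X` at `0 ∈ ℂᵏ` with `X 0 = 0` has linear part `L = DX(0)` whose eigenvalues
`λ₁, …, λ_k` (listed with multiplicity via the characteristic polynomial) satisfy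
(i) the Poincaré-domain condition (`0` is not in the convex hull of the eigenvalues) and
(ii) the nonresonance condition (`⟨m, λ⟩ ≠ λ_j` for all multi-indices `m` with `|m| ≥ 2`),
then `X` is holomorphically linearizable. -/
theorem poincare_linearization
    (k : ℕ) (X : (Fin k → ℂ) → (Fin k → ℂ))
    (hX : AnalyticAt ℂ X 0) (hX0 : X 0 = 0)
    (L : (Fin k → ℂ) →L[ℂ] (Fin k → ℂ)) (hL : L = fderiv ℂ X 0)
    (lam : Fin k → ℂ)
    (hlam : Matrix.charpoly (LinearMap.toMatrix'
        (L : (Fin k → ℂ) →ₗ[ℂ] (Fin k → ℂ)))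
      = ∏ i, (Polynomial.X - Polynomial.C (lam i)))
    (hPoincare : (0 : ℂ) ∉ convexHull ℝ (Set.range lam))
    (hNonres : ∀ m : Fin k → ℕ, 2 ≤ ∑ i, m i →
      ∀ j, (∑ i, (m i : ℂ) * lam i) ≠ lam j) :
    ∃ (V : Set (Fin k → ℂ)) (φ : (Fin k → ℂ) → (Fin k → ℂ)),
      V ∈ nhds (0 : Fin k → ℂ) ∧
      AnalyticOnNhd ℂ φ V ∧
      φ 0 = 0 ∧
      fderiv ℂ φ 0 = ContinuousLinearMap.id ℂ (Fin k → ℂ) ∧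
      ∀ z ∈ V, fderiv ℂ φ z (L z) = X (φ z) := by
  subst hL
  have hspec := spectrum_eq_range_of_charpoly_toMatrix' hlam
  exact poincare_linearization_general hX hX0
    (by rwa [hspec, closedConvexHull_eq_convexHull_of_finite (Set.finite_range lam)])
    fun n hn => isNonresonant_of_spectrum_eq_range hspec fun m hm => hNonres m (hm ▸ hn)
end

section
/- Let φ : ℂ → ℂ^N be a nonconstant entire map. With A(r) = ∫_{|ζ|<r} ‖φ'(ζ)‖² dλ(ζ) and L(r) = r·∫_0^{2π} ‖φ'(r e^{iθ})‖ dθ, one has liminf_{r → ∞} L(r)/A(r) = 0; in particular there is a sequence r_i → ∞ with L(r_i)/A(r_i) → 0. -/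
open MeasureTheory Filter

/-!
Only the conformal density `ρ = ‖φ'‖` of the metric pulled back by `φ` matters. In polar coordinates
`A' = r ∫ ρ²`, the integral being over the circle of radius `r`, so the Cauchy–Schwarz inequality on
that circle gives `L² ≤ 2π r A'`. If `L ≥ c A` for all large `r`, then
`(-1/A)' = A'/A² ≥ c² / (2π r)`, so that `-1/A` grows at least like `(c²/2π) log r`; but `-1/A < 0`.
-/

section LimInf

variable {α ι : Type*} [TopologicalSpace α] {f : Filter ι} {u : ι → α} {a : α}

lemma mapClusterPt_of_eventually_ge_of_frequently_lt [LinearOrder α] [OrderTopology α]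
    [NoMaxOrder α] (hle : ∀ᶠ x in f, a ≤ u x) (hlt : ∀ b > a, ∃ᶠ x in f, u x < b) :
    MapClusterPt a f u := by
  refine mapClusterPt_iff_frequently.2 fun s hs => ?_
  obtain ⟨b, hab, hbs⟩ := exists_Ico_subset_of_mem_nhds hs (exists_gt a)
  exact ((hlt b hab).and_eventually hle).mono fun x hx => hbs ⟨hx.2, hx.1⟩

lemma liminf_eq_of_mapClusterPt_of_eventually_ge [ConditionallyCompleteLinearOrder α]
    [OrderTopology α] [NoMaxOrder α] (h : MapClusterPt a f u) (hle : ∀ᶠ x in f, a ≤ u x) :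
    liminf u f = a := by
  obtain ⟨b, hab⟩ := exists_gt a
  have hcobdd : IsCoboundedUnder (· ≥ ·) f u :=
    .of_frequently_le ((h.frequently (Iio_mem_nhds hab)).mono fun _ hx => le_of_lt hx)
  exact le_antisymm (h.liminf_le ⟨a, hle⟩) (le_liminf_of_le hcobdd hle)

end LimInf

lemma sq_integral_le_measureReal_univ_mul_integral_sq {α : Type*} [MeasurableSpace α]
    {μ : Measure α} [IsFiniteMeasure μ] {f : α → ℝ} (hf : MemLp f 2 μ) :
    (∫ x, f x ∂μ) ^ 2 ≤ μ.real Set.univ * ∫ x, f x ^ 2 ∂μ := by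
  rcases eq_or_ne μ 0 with rfl | hμ
  · simp
  have : NeZero μ := ⟨hμ⟩
  have hpos : 0 < μ.real Set.univ := measureReal_univ_pos
  have jensen : (⨍ x, f x ∂μ) ^ 2 ≤ ⨍ x, f x ^ 2 ∂μ :=
    even_two.convexOn_pow.map_average_le (continuousOn_pow 2) isClosed_univ (by simp)
      (hf.integrable one_le_two) hf.integrable_sq
  rw [average_eq, average_eq, smul_eq_mul, smul_eq_mul, mul_pow, inv_pow,
    inv_mul_le_iff₀ (by positivity)] at jensen
  calc (∫ x, f x ∂μ) ^ 2 ≤ μ.real Set.univ ^ 2 * ((μ.real Set.univ)⁻¹ * ∫ x, f x ^ 2 ∂μ) := jensen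
    _ = μ.real Set.univ * ∫ x, f x ^ 2 ∂μ := by field_simp

lemma sq_intervalIntegral_le_sub_mul_intervalIntegral_sq {f : ℝ → ℝ} {a b : ℝ} (hab : a ≤ b)
    (hf : ContinuousOn f (Set.Icc a b)) :
    (∫ x in a..b, f x) ^ 2 ≤ (b - a) * ∫ x in a..b, f x ^ 2 := by
  have hf2 : MemLp f 2 (volume.restrict (Set.Ioc a b)) :=
    (memLp_two_iff_integrable_sq
      ((hf.mono Set.Ioc_subset_Icc_self).aestronglyMeasurable measurableSet_Ioc)).2
      ((hf.pow 2).integrableOn_Icc.mono_set Set.Ioc_subset_Icc_self)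
  simpa [intervalIntegral.integral_of_le hab, hab] using
    sq_integral_le_measureReal_univ_mul_integral_sq hf2

section Polar

variable {E : Type*} [NormedAddCommGroup E] [NormedSpace ℝ E] {g : ℂ → E}

lemma add_polarCoord_symm_eq_circleMap (c : ℂ) (p : ℝ × ℝ) :
    c + Complex.polarCoord.symm p = circleMap c p.1 p.2 := by
  simp [circleMap, Complex.exp_mul_I]

lemma continuous_uncurry_circleMap (c : ℂ) : Continuous fun p : ℝ × ℝ => circleMap c p.1 p.2 := by
  unfold circleMap
  fun_prop

lemma integral_comp_circleMap_eq_setIntegral_Ioo (g : ℂ → E) (c : ℂ) (t : ℝ) :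
    ∫ θ in (0 : ℝ)..(2 * Real.pi), g (circleMap c t θ)
      = ∫ θ in Set.Ioo (-Real.pi) Real.pi, g (circleMap c t θ) := by
  have h := ((periodic_circleMap c t).comp g).intervalIntegral_add_eq 0 (-Real.pi)
  rw [zero_add, show -Real.pi + 2 * Real.pi = Real.pi by ring] at h
  rw [← integral_Ioc_eq_integral_Ioo,
    ← intervalIntegral.integral_of_le (by linarith [Real.pi_pos])]
  exact h

lemma setIntegral_ball_eq_setIntegral_prod (g : ℂ → E) (c : ℂ) (r : ℝ) :
    ∫ z in Metric.ball c r, g z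
      = ∫ p in Set.Ioo 0 r ×ˢ Set.Ioo (-Real.pi) Real.pi, p.1 • g (circleMap c p.1 p.2) := by
  have hmeas : MeasurableSet {p : ℝ × ℝ | p.1 < r} :=
    measurableSet_lt measurable_fst measurable_const
  calc ∫ z in Metric.ball c r, g z
      = ∫ z, (Metric.ball c r).indicator g (c + z) := by
        rw [integral_add_left_eq_self, integral_indicator Metric.isOpen_ball.measurableSet]
    _ = ∫ p in polarCoord.target, p.1 • (Metric.ball c r).indicator g (circleMap c p.1 p.2) := by
        rw [← Complex.integral_comp_polarCoord_symm]
        simp only [add_polarCoord_symm_eq_circleMap]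
    _ = ∫ p in polarCoord.target,
          {p : ℝ × ℝ | p.1 < r}.indicator (fun p => p.1 • g (circleMap c p.1 p.2)) p := by
        refine setIntegral_congr_fun polarCoord.open_target.measurableSet fun p hp => ?_
        have hmem : circleMap c p.1 p.2 ∈ Metric.ball c r ↔ p ∈ {p : ℝ × ℝ | p.1 < r} := by
          have hp0 : 0 < p.1 := hp.1
          rw [mem_ball_iff_norm, circleMap_sub_center, norm_circleMap_zero, abs_of_pos hp0,
            Set.mem_ofPred_eq]
        by_cases h : p ∈ {p : ℝ × ℝ | p.1 < r}
        · simp only [Set.indicator_of_mem h, Set.indicator_of_mem (hmem.2 h)]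
        · simp only [Set.indicator_of_notMem h, Set.indicator_of_notMem (mt hmem.1 h), smul_zero]
    _ = ∫ p in Set.Ioo 0 r ×ˢ Set.Ioo (-Real.pi) Real.pi, p.1 • g (circleMap c p.1 p.2) := by
        rw [setIntegral_indicator hmeas]
        congr 2
        ext p
        simp only [polarCoord_target, Set.mem_inter_iff, Set.mem_prod, Set.mem_Ioi, Set.mem_Ioo,
          Set.mem_ofPred_eq]
        tauto

lemma setIntegral_ball_eq_intervalIntegral_circleMap (hg : Continuous g) (c : ℂ) {r : ℝ}
    (hr : 0 ≤ r) :
    ∫ z in Metric.ball c r, g z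
      = ∫ t in (0 : ℝ)..r, t • ∫ θ in (0 : ℝ)..(2 * Real.pi), g (circleMap c t θ) := by
  have hint : IntegrableOn (fun p : ℝ × ℝ => p.1 • g (circleMap c p.1 p.2))
      (Set.Ioo 0 r ×ˢ Set.Ioo (-Real.pi) Real.pi) :=
    ((continuous_fst.smul (hg.comp (continuous_uncurry_circleMap c))).continuousOn
      |>.integrableOn_compact (isCompact_Icc.prod isCompact_Icc)).mono_set
      (Set.prod_mono Set.Ioo_subset_Icc_self Set.Ioo_subset_Icc_self)
  rw [setIntegral_ball_eq_setIntegral_prod, Measure.volume_eq_prod, setIntegral_prod _ hint,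
    intervalIntegral.integral_of_le hr, integral_Ioc_eq_integral_Ioo]
  simp only [integral_smul, integral_comp_circleMap_eq_setIntegral_Ioo]

lemma hasDerivAt_setIntegral_ball [CompleteSpace E] (hg : Continuous g) (c : ℂ) {r : ℝ}
    (hr : 0 < r) :
    HasDerivAt (fun s => ∫ z in Metric.ball c s, g z)
      (r • ∫ θ in (0 : ℝ)..(2 * Real.pi), g (circleMap c r θ)) r := by
  have hcont : Continuous fun t : ℝ =>
      t • ∫ θ in (0 : ℝ)..(2 * Real.pi), g (circleMap c t θ) :=
    continuous_id.smul <| intervalIntegral.continuous_parametric_intervalIntegral_of_continuous'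
      (f := fun t θ => g (circleMap c t θ)) (hg.comp (continuous_uncurry_circleMap c)) _ _
  refine (hcont.integral_hasStrictDerivAt 0 r).hasDerivAt.congr_of_eventuallyEq ?_
  filter_upwards [eventually_gt_nhds hr] with s hs
  exact setIntegral_ball_eq_intervalIntegral_circleMap hg c hs.le

end Polar

lemma frequently_mul_deriv_lt_mul_sq {A : ℝ → ℝ} {k : ℝ} (hk : 0 < k)
    (hpos : ∀ᶠ r in atTop, 0 < A r) (hdiff : ∀ᶠ r in atTop, DifferentiableAt ℝ A r) :
    ∃ᶠ r in atTop, r * deriv A r < k * A r ^ 2 := by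
  intro hev
  obtain ⟨R, hR⟩ := eventually_atTop.1 ((eventually_gt_atTop 0).and (hpos.and (hdiff.and hev)))
  have hF (r : ℝ) (hr : R ≤ r) : HasDerivAt (fun r => -(A r)⁻¹ - k * Real.log r)
      (deriv A r / A r ^ 2 - k / r) r := by
    obtain ⟨hr0, hAr, hdiffr, -⟩ := hR r hr
    have hinv := (hdiffr.hasDerivAt.inv hAr.ne').neg
    have hlog := (Real.hasDerivAt_log hr0.ne').const_mul k
    exact (hinv.sub hlog).congr_deriv (by ring)
  have hmono : MonotoneOn (fun r => -(A r)⁻¹ - k * Real.log r) (Set.Ici R) := by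
    refine monotoneOn_of_hasDerivWithinAt_nonneg (convex_Ici R)
      (fun r hr => (hF r hr).continuousAt.continuousWithinAt)
      (fun r hr => (hF r (interior_subset hr)).hasDerivWithinAt) fun r hr => ?_
    obtain ⟨hr0, hAr, -, hge⟩ := hR r (interior_subset hr)
    rw [sub_nonneg, div_le_div_iff₀ hr0 (by positivity), mul_comm (deriv A r)]
    exact not_lt.1 hge
  obtain ⟨r, hlog, hRr⟩ := (((Real.tendsto_log_atTop.const_mul_atTop hk).eventually_gt_atTop
    ((A R)⁻¹ + k * Real.log R)).and (eventually_ge_atTop R)).exists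
  have hle : -(A R)⁻¹ - k * Real.log R ≤ -(A r)⁻¹ - k * Real.log r :=
    hmono Set.self_mem_Ici hRr hRr
  linarith [inv_pos.2 (hR r hRr).2.1]

section ConformalMetric

/-- The area of the disc `‖z‖ < r` in the conformal metric `ρ |dz|`. For `ρ = ‖φ'‖` it is the area,
with multiplicity, of the image of the disc under the holomorphic map `φ`. -/
noncomputable def conformalArea (ρ : ℂ → ℝ) (r : ℝ) : ℝ :=
  ∫ z in Metric.ball (0 : ℂ) r, ρ z ^ 2

/-- The length of the circle `‖z‖ = r` in the conformal metric `ρ |dz|`, for `r ≥ 0`. For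
`ρ = ‖φ'‖` it is the length, with multiplicity, of the image of the circle under the holomorphic
map `φ`. -/
noncomputable def conformalLength (ρ : ℂ → ℝ) (r : ℝ) : ℝ :=
  r * ∫ θ in (0 : ℝ)..(2 * Real.pi), ρ (circleMap 0 r θ)

variable {ρ : ℂ → ℝ}

lemma conformalArea_nonneg (ρ : ℂ → ℝ) (r : ℝ) : 0 ≤ conformalArea ρ r :=
  integral_nonneg fun _ => sq_nonneg _

lemma conformalLength_nonneg (hρ : ∀ z, 0 ≤ ρ z) {r : ℝ} (hr : 0 ≤ r) :
    0 ≤ conformalLength ρ r :=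
  mul_nonneg hr (intervalIntegral.integral_nonneg Real.two_pi_pos.le fun _ _ => hρ _)

lemma conformalArea_pos (hρ : Continuous ρ) {z : ℂ} (hz : ρ z ≠ 0) {r : ℝ} (hr : ‖z‖ < r) :
    0 < conformalArea ρ r := by
  have hint : IntegrableOn (fun z => ρ z ^ 2) (Metric.ball 0 r) :=
    ((hρ.pow 2).continuousOn.integrableOn_compact (isCompact_closedBall 0 r)).mono_set
      Metric.ball_subset_closedBall
  refine (setIntegral_pos_iff_support_of_nonneg_ae (ae_of_all _ fun _ => sq_nonneg _) hint).2 ?_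
  exact ((hρ.pow 2).isOpen_support.inter Metric.isOpen_ball).measure_pos volume
    ⟨z, pow_ne_zero 2 hz, mem_ball_zero_iff.2 hr⟩

lemma eventually_conformalArea_pos (hρ : Continuous ρ) (hne : ∃ z, ρ z ≠ 0) :
    ∀ᶠ r in atTop, 0 < conformalArea ρ r := by
  obtain ⟨z, hz⟩ := hne
  filter_upwards [eventually_gt_atTop ‖z‖] with r hr using conformalArea_pos hρ hz hr

lemma hasDerivAt_conformalArea (hρ : Continuous ρ) {r : ℝ} (hr : 0 < r) :
    HasDerivAt (conformalArea ρ)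
      (r * ∫ θ in (0 : ℝ)..(2 * Real.pi), ρ (circleMap 0 r θ) ^ 2) r :=
  hasDerivAt_setIntegral_ball (hρ.pow 2) 0 hr

lemma sq_conformalLength_le (hρ : Continuous ρ) {r : ℝ} (hr : 0 < r) :
    conformalLength ρ r ^ 2 ≤ 2 * Real.pi * (r * deriv (conformalArea ρ) r) := by
  have cauchySchwarz := sq_intervalIntegral_le_sub_mul_intervalIntegral_sq Real.two_pi_pos.le
    (hρ.comp (continuous_circleMap 0 r)).continuousOn
  rw [sub_zero] at cauchySchwarz
  calc conformalLength ρ r ^ 2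
      = r ^ 2 * (∫ θ in (0 : ℝ)..(2 * Real.pi), ρ (circleMap 0 r θ)) ^ 2 := mul_pow _ _ _
    _ ≤ r ^ 2 * (2 * Real.pi * ∫ θ in (0 : ℝ)..(2 * Real.pi), ρ (circleMap 0 r θ) ^ 2) :=
        mul_le_mul_of_nonneg_left cauchySchwarz (sq_nonneg r)
    _ = 2 * Real.pi * (r * deriv (conformalArea ρ) r) := by
        rw [(hasDerivAt_conformalArea hρ hr).deriv]
        ring

lemma frequently_conformalLength_lt_mul_conformalArea (hρ : Continuous ρ) (hne : ∃ z, ρ z ≠ 0)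
    {c : ℝ} (hc : 0 < c) :
    ∃ᶠ r in atTop, conformalLength ρ r < c * conformalArea ρ r := by
  have hgrowth : ∃ᶠ r in atTop,
      r * deriv (conformalArea ρ) r < c ^ 2 / (2 * Real.pi) * conformalArea ρ r ^ 2 :=
    frequently_mul_deriv_lt_mul_sq (by positivity) (eventually_conformalArea_pos hρ hne)
      ((eventually_gt_atTop 0).mono fun _ hr =>
        (hasDerivAt_conformalArea hρ hr).differentiableAt)
  refine (hgrowth.and_eventually (eventually_gt_atTop 0)).mono fun r ⟨hlt, hr⟩ => ?_
  refine lt_of_pow_lt_pow_left₀ 2 (mul_nonneg hc.le (conformalArea_nonneg ρ r)) ?_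
  calc conformalLength ρ r ^ 2
      ≤ 2 * Real.pi * (r * deriv (conformalArea ρ) r) := sq_conformalLength_le hρ hr
    _ < 2 * Real.pi * (c ^ 2 / (2 * Real.pi) * conformalArea ρ r ^ 2) := by gcongr
    _ = (c * conformalArea ρ r) ^ 2 := by field_simp

theorem ahlfors_liminf_length_over_area_general (hρ : Continuous ρ) (hρ0 : ∀ z, 0 ≤ ρ z)
    (hne : ∃ z, ρ z ≠ 0) :
    liminf (fun r => conformalLength ρ r / conformalArea ρ r) atTop = 0 ∧
    ∃ s : ℕ → ℝ, Tendsto s atTop atTop ∧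
      Tendsto (fun i => conformalLength ρ (s i) / conformalArea ρ (s i)) atTop (nhds 0) := by
  have hnonneg : ∀ᶠ r in atTop, 0 ≤ conformalLength ρ r / conformalArea ρ r :=
    (eventually_ge_atTop 0).mono fun r hr =>
      div_nonneg (conformalLength_nonneg hρ0 hr) (conformalArea_nonneg ρ r)
  have hcluster : MapClusterPt 0 atTop fun r => conformalLength ρ r / conformalArea ρ r :=
    mapClusterPt_of_eventually_ge_of_frequently_lt hnonneg fun c hc =>
      ((frequently_conformalLength_lt_mul_conformalArea hρ hne hc).and_eventually
        (eventually_conformalArea_pos hρ hne)).mono fun _ h => (div_lt_iff₀ h.2).2 h.1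
  obtain ⟨s, hlim, hs⟩ := hcluster.exists_seq_tendsto
  exact ⟨liminf_eq_of_mapClusterPt_of_eventually_ge hcluster hnonneg, s, hs, hlim⟩

end ConformalMetric

lemma exists_deriv_ne_zero_of_ne {𝕜 E : Type*} [RCLike 𝕜] [NormedAddCommGroup E] [NormedSpace 𝕜 E]
    {f : 𝕜 → E} (hf : Differentiable 𝕜 f) {a b : 𝕜} (hab : f a ≠ f b) : ∃ z, deriv f z ≠ 0 := by
  contrapose! hab
  exact is_const_of_deriv_eq_zero hf hab a b

/-- **Ahlfors' length–area argument.** For a nonconstant entire map `φ : ℂ → ℂᴺ`, with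
`A(r)` the area (with multiplicity) of `φ(Δ_r)` and `L(r)` the length (with multiplicity)
of `φ(∂Δ_r)`, one has `liminf_{r→∞} L(r)/A(r) = 0`; in particular there is a sequence
`r_i → ∞` with `L(r_i)/A(r_i) → 0`. -/
theorem ahlfors_liminf_length_over_area
    (N : ℕ) (φ : ℂ → EuclideanSpace ℂ (Fin N)) (hφ : Differentiable ℂ φ)
    (hnc : ∃ a b : ℂ, φ a ≠ φ b)
    (A L : ℝ → ℝ)
    (hA : ∀ r : ℝ, A r = ∫ ζ in Metric.ball (0 : ℂ) r, ‖deriv φ ζ‖ ^ 2)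
    (hL : ∀ r : ℝ, L r = r * ∫ θ in (0 : ℝ)..(2 * Real.pi),
      ‖deriv φ ((r : ℂ) * Complex.exp ((θ : ℂ) * Complex.I))‖) :
    liminf (fun r : ℝ => L r / A r) atTop = 0 ∧
    ∃ s : ℕ → ℝ, Tendsto s atTop atTop ∧
      Tendsto (fun i => L (s i) / A (s i)) atTop (nhds 0) := by
  obtain ⟨a, b, hab⟩ := hnc
  obtain rfl : A = conformalArea (‖deriv φ ·‖) := funext hA
  obtain rfl : L = conformalLength (‖deriv φ ·‖) :=
    funext fun r => by simp only [hL, conformalLength, circleMap_zero]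
  exact ahlfors_liminf_length_over_area_general (hφ.contDiff.continuous_deriv le_rfl).norm
    (fun _ => norm_nonneg _) ((exists_deriv_ne_zero_of_ne hφ hab).imp fun _ => norm_ne_zero_iff.2)
end

section
/- (Dense leaves in Grauert's Levi-flat example.) Let L₁ = ℤ + ℤ·i and L₂ = ℤ + √2·ℤ·i be lattices in ℂ. Then the closure in ℂ × ℂ of the set {(z + ω₁, z + ω₂) : z ∈ ℂ, ω₁ ∈ L₁, ω₂ ∈ L₂} equals {(z, w) ∈ ℂ² : Re(z − w) ∈ ℤ}. Equivalently, the leaf through the origin of the Levi-flat hypersurface S = {Re(z − w) = 0} in the product of tori T₁ × T₂ = (ℂ/L₁) × (ℂ/L₂) is dense in S. -/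
/-!
Subtraction `G × G → G` on a topological group is continuous and open, so closures commute with
preimages under it. The lifted leaf is the preimage of `L₁ + L₂`, and for rectangular lattices this
sum is the product of `ℤ` (real parts), which is closed in `ℝ`, and of the group generated by the
two heights (imaginary parts), which is dense in `ℝ` because the ratio of the heights is irrational.
-/

open Complex

section DiagonalTranslates

variable {G : Type*}

theorem isOpenMap_sub [AddGroup G] [TopologicalSpace G] [ContinuousAdd G] :
    IsOpenMap fun p : G × G => p.1 - p.2 :=
  IsOpenMap.of_sections fun p =>
    ⟨fun s => (s + p.2, p.2), by fun_prop, by simp, fun s => add_sub_cancel_right s p.2⟩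

/-- The lift to `G × G` of the image of the diagonal in `(G ⧸ Γ₁) × (G ⧸ Γ₂)`, that is, the union of
the translates of the diagonal of `G × G` by `Γ₁ × Γ₂`. For lattices in `ℂ` this is the lift of the
leaf through the origin. -/
def diagonalLift [AddGroup G] (Γ₁ Γ₂ : AddSubgroup G) : Set (G × G) :=
  {p | ∃ z, ∃ ω₁ ∈ Γ₁, ∃ ω₂ ∈ Γ₂, p = (z + ω₁, z + ω₂)}

variable [AddCommGroup G] (Γ₁ Γ₂ : AddSubgroup G)

theorem diagonalLift_eq_preimage_sub :
    diagonalLift Γ₁ Γ₂ = (fun p : G × G => p.1 - p.2) ⁻¹' (Γ₁ ⊔ Γ₂ : AddSubgroup G) := by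
  ext ⟨x, y⟩
  constructor
  · rintro ⟨z, ω₁, hω₁, ω₂, hω₂, hxy⟩
    obtain ⟨rfl, rfl⟩ := Prod.mk.inj hxy
    simpa using sub_mem (AddSubgroup.mem_sup_left hω₁) (AddSubgroup.mem_sup_right hω₂)
  · intro hxy
    obtain ⟨ω₁, hω₁, ω₂, hω₂, hsum⟩ := AddSubgroup.mem_sup.1 hxy
    have hx : x = y + ω₂ + ω₁ := by rw [add_assoc, add_comm ω₂, hsum, add_sub_cancel]
    exact ⟨y + ω₂, ω₁, hω₁, -ω₂, neg_mem hω₂, by rw [← hx, add_neg_cancel_right]⟩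

theorem closure_diagonalLift [TopologicalSpace G] [IsTopologicalAddGroup G] :
    closure (diagonalLift Γ₁ Γ₂) =
      (fun p : G × G => p.1 - p.2) ⁻¹' closure (Γ₁ ⊔ Γ₂ : AddSubgroup G) := by
  rw [diagonalLift_eq_preimage_sub,
    isOpenMap_sub.preimage_closure_eq_closure_preimage continuous_sub]

end DiagonalTranslates

/-- The subgroup `ℤ + α·ℤi` of `ℂ`, a rectangular lattice when `α ≠ 0`. -/
def rectangularLattice (α : ℝ) : AddSubgroup ℂ :=
  AddSubgroup.closure {1, (α : ℂ) * I}

namespace rectangularLattice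

theorem mem_iff {α : ℝ} {z : ℂ} :
    z ∈ rectangularLattice α ↔ ∃ a b : ℤ, a + b * (α : ℂ) * I = z := by
  simp [rectangularLattice, AddSubgroup.mem_closure_pair, mul_assoc]

theorem coe_sup (α β : ℝ) :
    ((rectangularLattice α ⊔ rectangularLattice β : AddSubgroup ℂ) : Set ℂ) =
      Set.range ((↑) : ℤ → ℝ) ×ℂ (AddSubgroup.closure {α, β} : Set ℝ) := by
  ext z
  simp only [SetLike.mem_coe, AddSubgroup.mem_sup, mem_iff, mem_reProdIm,
    AddSubgroup.mem_closure_pair, zsmul_eq_mul]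
  constructor
  · rintro ⟨_, ⟨a, b, rfl⟩, _, ⟨a', b', rfl⟩, rfl⟩
    exact ⟨⟨a + a', by simp⟩, b, b', by simp⟩
  · rintro ⟨⟨a, ha⟩, b, b', hb⟩
    exact ⟨_, ⟨a, b, rfl⟩, _, ⟨0, b', rfl⟩, Complex.ext (by simp [ha]) (by simp [hb])⟩

theorem closure_sup {α β : ℝ} (hαβ : Irrational (α / β)) :
    closure ((rectangularLattice α ⊔ rectangularLattice β : AddSubgroup ℂ) : Set ℂ) =
      re ⁻¹' Set.range ((↑) : ℤ → ℝ) := by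
  rw [coe_sup, closure_reProdIm, Int.isClosedEmbedding_coe_real.isClosed_range.closure_eq,
    (dense_addSubgroupClosure_pair_iff.2 hαβ).closure_eq]
  simp [reProdIm]

end rectangularLattice

theorem grauert_leaf_dense_general {α β : ℝ} (hαβ : Irrational (α / β)) :
    closure {p : ℂ × ℂ | ∃ (z : ℂ) (a b a' b' : ℤ),
        p = (z + (a + b * (α : ℂ) * I), z + (a' + b' * (β : ℂ) * I))} =
      {p : ℂ × ℂ | ∃ n : ℤ, (p.1 - p.2).re = n} :=
  calc
    _ = closure (diagonalLift (rectangularLattice α) (rectangularLattice β)) := by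
      simp [diagonalLift, rectangularLattice.mem_iff]
    _ = (fun p : ℂ × ℂ => p.1 - p.2) ⁻¹' (re ⁻¹' Set.range ((↑) : ℤ → ℝ)) := by
      rw [closure_diagonalLift, rectangularLattice.closure_sup hαβ]
    _ = _ := by
      ext p
      simp [eq_comm]

/-- **Dense leaves in Grauert's Levi-flat example.** With the lattices `L₁ = ℤ + ℤi` and
`L₂ = ℤ + √2·ℤi`, the closure in `ℂ × ℂ` of `{(z + ω₁, z + ω₂) : z ∈ ℂ, ω₁ ∈ L₁, ω₂ ∈ L₂}`
(the lift of the leaf through the origin of `{Re(z − w) = 0} ⊆ (ℂ/L₁) × (ℂ/L₂)`)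
is `{(z, w) : Re(z − w) ∈ ℤ}` (the lift of the Levi-flat hypersurface). -/
theorem grauert_leaf_dense :
    closure {p : ℂ × ℂ | ∃ (z : ℂ) (a b a' b' : ℤ),
        p = (z + ((a : ℂ) + (b : ℂ) * Complex.I),
             z + ((a' : ℂ) + (b' : ℂ) * (Real.sqrt 2 : ℂ) * Complex.I))} =
      {p : ℂ × ℂ | ∃ n : ℤ, (p.1 - p.2).re = (n : ℝ)} := by
  simpa using grauert_leaf_dense_general (α := 1) (β := √2) (by simpa using irrational_sqrt_two)
end
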